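/- Let F satisfy Condition A, let (a, b) with a ∈ [−∞, ∞) and b ∈ (−∞, ∞] be the interior of J(F) = {x ∈ ℝ : 0 < F(x) < 1}, fix θ ∈ ℝ, and let ψ_θ ∈ SC₀ be a maximizer of ψ ↦ Ψ(θ, ψ, F) over SC₀. Then the interior of dom ψ_θ = {ψ_θ > −∞} equals (−d, d), where d = max(b − θ, θ − a) (so int dom ψ_θ = ℝ when d = ∞). -/

import Mathlib

open MeasureTheory Filter Set
open scoped ENNReal NNReal

noncomputable section

/-- `exp` of an extended real number, valued in `ℝ≥0∞`. -/
def expE (y : EReal) : ℝ≥0∞ :=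
  if y = ⊥ then 0 else if y = ⊤ then ⊤ else ENNReal.ofReal (Real.exp y.toReal)

/-- Truncation of an extended real number to `ℝ≥0∞` (negative values go to `0`). -/
def toENN (y : EReal) : ℝ≥0∞ :=
  if y = ⊤ then ⊤ else ENNReal.ofReal y.toReal

/-- Signed (upper-minus-lower) integral of an `EReal`-valued function against a measure. -/
def eIntegral (μ : Measure ℝ) (ψ : ℝ → EReal) : EReal :=
  ((∫⁻ x, toENN (ψ x) ∂μ : ℝ≥0∞) : EReal) - ((∫⁻ x, toENN (-(ψ x)) ∂μ : ℝ≥0∞) : EReal)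

/-- Concavity for `EReal`-valued functions on `ℝ`. -/
def EConcave (ψ : ℝ → EReal) : Prop :=
  ∀ x y : ℝ, ∀ t : ℝ, 0 ≤ t → t ≤ 1 →
    ((t : EReal) * ψ x + (((1 - t) : ℝ) : EReal) * ψ y) ≤ ψ (t * x + (1 - t) * y)

/-- The class `SC₀` of proper, closed (upper semicontinuous), concave functions
`ℝ → [−∞, ∞)` that are symmetric about `0`. -/
def memSC0 (ψ : ℝ → EReal) : Prop :=
  (∀ x, ψ x < ⊤) ∧ (∃ x, ψ x ≠ ⊥) ∧ UpperSemicontinuous ψ ∧ EConcave ψ ∧ ∀ x, ψ (-x) = ψ x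

/-- The criterion function `Ψ(θ, ψ, F) = ∫ ψ(x − θ) dμ(x) − ∫ e^{ψ(x)} dx`. -/
def Psi (θ : ℝ) (ψ : ℝ → EReal) (μ : Measure ℝ) : EReal :=
  eIntegral μ (fun x => ψ (x - θ)) - ((∫⁻ x, expE (ψ x) : ℝ≥0∞) : EReal)

/-- `L(θ; F) = sup_{ψ ∈ SC₀} Ψ(θ, ψ, F)`. -/
def Ltheta (θ : ℝ) (μ : Measure ℝ) : EReal :=
  ⨆ ψ ∈ {ψ : ℝ → EReal | memSC0 ψ}, Psi θ ψ μ

/-- `L(F) = sup_{θ ∈ ℝ, ψ ∈ SC₀} Ψ(θ, ψ, F)`. -/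
def Lsup (μ : Measure ℝ) : EReal := ⨆ θ : ℝ, Ltheta θ μ

/-- Condition A: `μ` is a probability measure that is not a point mass,
with a finite first absolute moment. -/
def CondA (μ : Measure ℝ) : Prop :=
  IsProbabilityMeasure μ ∧ (∀ x : ℝ, μ ≠ Measure.dirac x) ∧
    (∫⁻ x, ENNReal.ofReal |x| ∂μ) < ⊤

/-- The empirical measure of the data `X₁, …, Xₙ`. -/
def empMeas {n : ℕ} (X : Fin n → ℝ) : Measure ℝ :=
  ((n : ℝ≥0∞))⁻¹ • ∑ i : Fin n, Measure.dirac (X i)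

/-- The empirical measure of the first `n` entries of a sequence. -/
def empSeq (X : ℕ → ℝ) (n : ℕ) : Measure ℝ :=
  ((n : ℝ≥0∞))⁻¹ • ∑ i ∈ Finset.range n, Measure.dirac (X i)

/-- The density `e^ψ` as a real-valued function. -/
def gReal (ψ : ℝ → EReal) (x : ℝ) : ℝ := (expE (ψ x)).toReal

/-- A knot of a concave function `ψ`: a point where the left and right derivatives
differ, or a boundary point of `dom ψ = {ψ > −∞}`. -/
def IsKnot (ψ : ℝ → EReal) (x : ℝ) : Prop :=
  x ∈ frontier {y : ℝ | ψ y ≠ ⊥} ∨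
    derivWithin (fun y => (ψ y).toReal) (Set.Iio x) x ≠
      derivWithin (fun y => (ψ y).toReal) (Set.Ioi x) x

/-- The class `𝒞` of proper closed concave functions `ℝ → [−∞, ∞)`. -/
def memC (φ : ℝ → EReal) : Prop :=
  (∀ x, φ x < ⊤) ∧ (∃ x, φ x ≠ ⊥) ∧ UpperSemicontinuous φ ∧ EConcave φ

/-- The criterion function `ω(φ, F) = ∫ φ dμ − ∫ e^{φ(x)} dx`. -/
def omegaF (φ : ℝ → EReal) (μ : Measure ℝ) : EReal :=
  eIntegral μ φ - ((∫⁻ x, expE (φ x) : ℝ≥0∞) : EReal)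

/-- `(θ, ψ)` maximizes `Ψ(·, ·, μ)` over `ℝ × SC₀`. -/
def IsMaximizer (θ : ℝ) (ψ : ℝ → EReal) (μ : Measure ℝ) : Prop :=
  memSC0 ψ ∧ ∀ (θ' : ℝ) (ψ' : ℝ → EReal), memSC0 ψ' → Psi θ' ψ' μ ≤ Psi θ ψ μ

/-- Condition B: the `θ`-component of a maximizer of `Ψ(·, ·, μ)` is unique. -/
def CondB (μ : Measure ℝ) : Prop :=
  ∀ (θ₁ θ₂ : ℝ) (ψ₁ ψ₂ : ℝ → EReal),
    IsMaximizer θ₁ ψ₁ μ → IsMaximizer θ₂ ψ₂ μ → θ₁ = θ₂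

/-- `J(F) = {x : 0 < F(x) < 1}`. -/
def Jset (μ : Measure ℝ) : Set ℝ := {x : ℝ | 0 < μ (Set.Iic x) ∧ μ (Set.Iic x) < 1}

/-- The Hellinger distance between two densities. -/
def Hdist (f g : ℝ → ℝ) : ℝ :=
  Real.sqrt ((1 / 2) * ∫ x, (Real.sqrt (f x) - Real.sqrt (g x)) ^ 2)

/-- Finite Fisher information for location: `g` is a.e. differentiable with
square-integrable score. -/
def FiniteFisher (g : ℝ → ℝ) : Prop :=
  ∃ D : ℝ → ℝ, (∀ᵐ x : ℝ, HasDerivAt g (D x) x) ∧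
    (∫⁻ x, ENNReal.ofReal ((D x) ^ 2 / g x)) < ⊤

/-- The symmetrization `μ^{sym}_θ = (μ + R_θ#μ)/2` of a measure about `θ`. -/
def symMeas (θ : ℝ) (μ : Measure ℝ) : Measure ℝ :=
  ((2 : ℝ≥0∞))⁻¹ • (μ + Measure.map (fun x => 2 * θ - x) μ)

end

/-!
Write `S` for the support of `μ`. The core of the argument is that the domain of a maximizer `ψ`
has interior `{x | ∃ y ∈ S, |x| < |y - θ|}`.

The maximal value is not `-∞`, because `-|x|` already has a finite criterion. Hence
`ψ (y - θ) > -∞` for `μ`-almost every `y`; as `ψ` decreases in `|x|`, a point `x` with `ψ x = -∞`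
forces `|y - θ| ≤ |x|` almost surely, hence on all of `S`. Conversely, if `|y - θ| ≤ r` on `S`,
then replacing `ψ` by `-∞` outside `[-r, r]` does not affect `∫ ψ (y - θ) dμ`, but strictly
decreases `∫ e^ψ` as soon as `ψ z > -∞` for some `|z| > r`.

On the other side, the interior of `J(F)` consists of the points lying strictly between two points
of `S`, so `a` and `b` are the infimum and the supremum of `S`, and `d = sup_{y ∈ S} |y - θ|`.
-/

section Support

variable {X : Type*} [TopologicalSpace X] [MeasurableSpace X] [HereditarilyLindelofSpace X]

theorem measure_pos_iff_inter_support_nonempty {μ : Measure X} {U : Set X} (hU : IsOpen U) :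
    0 < μ U ↔ (U ∩ μ.support).Nonempty := by
  refine ⟨Measure.nonempty_inter_support_of_pos, ?_⟩
  rintro ⟨x, hxU, hx⟩
  exact (Measure.mem_support_iff_forall x).1 hx U (hU.mem_nhds hxU)

theorem support_nontrivial_of_ne_dirac {μ : Measure X} [IsProbabilityMeasure μ]
    (hμ : ∀ x, μ ≠ Measure.dirac x) : μ.support.Nontrivial := by
  by_contra hS
  rw [not_nontrivial_iff] at hS
  obtain ⟨x, hx⟩ := Measure.nonempty_support (IsProbabilityMeasure.ne_zero μ)
  have hae : id =ᵐ[μ] fun _ ↦ x := by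
    filter_upwards [Measure.support_mem_ae] with y hy using hS hy hx
  apply hμ x
  calc μ = μ.map id := Measure.map_id.symm
    _ = μ.map fun _ ↦ x := Measure.map_congr hae
    _ = Measure.dirac x := by rw [Measure.map_const, measure_univ, one_smul]

end Support

section CriticalInterval

theorem interior_Jset (μ : Measure ℝ) [IsProbabilityMeasure μ] :
    interior (Jset μ) = {x | ∃ y ∈ μ.support, y < x} ∩ {x | ∃ y ∈ μ.support, x < y} := by
  have hIio (x : ℝ) : 0 < μ (Iio x) ↔ ∃ y ∈ μ.support, y < x := by
    simp only [measure_pos_iff_inter_support_nonempty isOpen_Iio, Set.Nonempty, mem_inter_iff,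
      mem_Iio, and_comm]
  have hIoi (x : ℝ) : μ (Iic x) < 1 ↔ ∃ y ∈ μ.support, x < y := by
    rw [prob_le_one.lt_iff_ne, ne_eq, ← prob_compl_eq_zero_iff measurableSet_Iic, compl_Iic,
      ← ne_eq, ← pos_iff_ne_zero, measure_pos_iff_inter_support_nonempty isOpen_Ioi]
    simp only [Set.Nonempty, mem_inter_iff, mem_Ioi, and_comm]
  refine Subset.antisymm (fun x hx ↦ ?_) (interior_maximal (fun x hx ↦ ?_) ?_)
  · obtain ⟨c, hcx, hc⟩ := exists_Ioc_subset_of_mem_nhds (mem_interior_iff_mem_nhds.1 hx)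
      (exists_lt x)
    obtain ⟨w, hcw, hwx⟩ := exists_between hcx
    have hw : w ∈ Jset μ := hc ⟨hcw, hwx.le⟩
    exact ⟨(hIio x).1 (hw.1.trans_le (measure_mono (Iic_subset_Iio.2 hwx))),
      (hIoi x).1 (interior_subset hx).2⟩
  · exact ⟨((hIio x).2 hx.1).trans_le (measure_mono Iio_subset_Iic_self), (hIoi x).2 hx.2⟩
  · simp only [← exists_prop, ofPred_exists]
    exact (isOpen_biUnion fun _ _ ↦ isOpen_Ioi).inter (isOpen_biUnion fun _ _ ↦ isOpen_Iio)

theorem eq_and_eq_of_isUpperSet_inter_isLowerSet_eq {α : Type*} [LinearOrder α]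
    {U U' L L' : Set α} (hU : IsUpperSet U) (hU' : IsUpperSet U') (hL : IsLowerSet L)
    (hL' : IsLowerSet L') (h : U ∩ L = U' ∩ L') (hne : (U ∩ L).Nonempty) : U = U' ∧ L = L' := by
  obtain ⟨m, hm⟩ := hne
  have hm' : m ∈ U' ∩ L' := h ▸ hm
  refine ⟨ext fun x ↦ ?_, ext fun x ↦ ?_⟩ <;> have hx := Set.ext_iff.1 h x <;>
    rcases le_total x m with hxm | hmx
  · simpa only [mem_inter_iff, hL hxm hm.2, hL' hxm hm'.2, and_true] using hx
  · exact iff_of_true (hU hmx hm.1) (hU' hmx hm'.1)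
  · exact iff_of_true (hL hxm hm.2) (hL' hxm hm'.2)
  · simpa only [mem_inter_iff, hU hmx hm.1, hU' hmx hm'.1, true_and] using hx

variable {μ : Measure ℝ} {a b : EReal}

theorem lt_coe_and_coe_lt_iff_of_interior_Jset_eq [IsProbabilityMeasure μ]
    (hμ : ∀ x, μ ≠ Measure.dirac x)
    (hJ : interior (Jset μ) = {x : ℝ | a < (x : EReal) ∧ (x : EReal) < b}) :
    (∀ x : ℝ, a < x ↔ ∃ y ∈ μ.support, y < x) ∧ ∀ x : ℝ, x < b ↔ ∃ y ∈ μ.support, x < y := by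
  obtain ⟨u, hu, v, hv, huv⟩ := (support_nontrivial_of_ne_dirac hμ).exists_lt
  obtain ⟨m, hum, hmv⟩ := exists_between huv
  have key := eq_and_eq_of_isUpperSet_inter_isLowerSet_eq
    (U := {x : ℝ | ∃ y ∈ μ.support, y < x}) (U' := {x : ℝ | a < (x : EReal)})
    (L := {x : ℝ | ∃ y ∈ μ.support, x < y}) (L' := {x : ℝ | (x : EReal) < b})
    (fun _ _ hxx' ⟨y, hy, hyx⟩ ↦ ⟨y, hy, hyx.trans_le hxx'⟩)
    (fun _ _ hxx' hx ↦ lt_of_lt_of_le hx (EReal.coe_le_coe_iff.2 hxx'))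
    (fun _ _ hxx' ⟨y, hy, hyx⟩ ↦ ⟨y, hy, hxx'.trans_lt hyx⟩)
    (fun _ _ hxx' hx ↦ lt_of_le_of_lt (EReal.coe_le_coe_iff.2 hxx') hx)
    ((interior_Jset μ).symm.trans hJ) ⟨m, ⟨u, hu, hum⟩, ⟨v, hv, hmv⟩⟩
  exact ⟨fun x ↦ (Set.ext_iff.1 key.1 x).symm, fun x ↦ (Set.ext_iff.1 key.2 x).symm⟩

theorem coe_lt_max_sub_iff_exists_mem_support [IsProbabilityMeasure μ]
    (hμ : ∀ x, μ ≠ Measure.dirac x)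
    (hJ : interior (Jset μ) = {x : ℝ | a < (x : EReal) ∧ (x : EReal) < b}) (θ r : ℝ) :
    (r : EReal) < max (b - θ) (θ - a) ↔ ∃ y ∈ μ.support, r < |y - θ| := by
  obtain ⟨ha, hb⟩ := lt_coe_and_coe_lt_iff_of_interior_Jset_eq hμ hJ
  have hbθ : (r : EReal) < b - θ ↔ ∃ y ∈ μ.support, r + θ < y := by
    rw [EReal.lt_sub_iff_add_lt (.inl (EReal.coe_ne_bot θ)) (.inl (EReal.coe_ne_top θ)),
      ← EReal.coe_add, hb]
  have haθ : (r : EReal) < θ - a ↔ ∃ y ∈ μ.support, y < θ - r := by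
    rw [← ha]
    induction a with
    | bot => simpa using EReal.bot_lt_coe (θ - r)
    | top => simp
    | coe a => rw [← EReal.coe_sub, EReal.coe_lt_coe_iff, EReal.coe_lt_coe_iff, lt_sub_comm]
  simp only [lt_max_iff, hbθ, haθ, ← exists_or, ← and_or_left, lt_abs, lt_sub_iff_add_lt,
    neg_sub, add_comm r]

end CriticalInterval

theorem neg_lt_coe_and_coe_lt_iff (d : EReal) (x : ℝ) :
    (-d < (x : EReal) ∧ (x : EReal) < d) ↔ ((|x| : ℝ) : EReal) < d := by
  rw [EReal.neg_lt_comm, ← EReal.coe_neg, abs_eq_max_neg, EReal.coe_strictMono.monotone.map_max,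
    max_lt_iff, and_comm]

section Criterion

theorem expE_eq_exp (y : EReal) : expE y = y.exp := by
  induction y <;> simp [expE]

theorem toENN_eq_toENNReal (y : EReal) : toENN y = y.toENNReal := rfl

theorem eIntegral_ne_bot_iff {μ : Measure ℝ} {φ : ℝ → EReal} :
    eIntegral μ φ ≠ ⊥ ↔ ∫⁻ x, toENN (-φ x) ∂μ ≠ ⊤ := by
  simp [eIntegral, sub_eq_add_neg]

theorem eIntegral_ne_top_of_le {μ : Measure ℝ} [IsFiniteMeasure μ] {φ : ℝ → EReal} {c : EReal}
    (hc : c ≠ ⊤) (hφ : ∀ x, φ x ≤ c) : eIntegral μ φ ≠ ⊤ := by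
  have hpos : ∫⁻ x, toENN (φ x) ∂μ ≠ ⊤ := by
    refine ne_top_of_le_ne_top ?_ (lintegral_mono fun x ↦ EReal.toENNReal_le_toENNReal (hφ x))
    simpa using ENNReal.mul_ne_top (EReal.toENNReal_ne_top_iff.2 hc) (measure_ne_top μ univ)
  exact EReal.add_ne_top (by simpa using hpos) (by simp)

theorem eIntegral_congr_ae {μ : Measure ℝ} {φ χ : ℝ → EReal} (h : φ =ᵐ[μ] χ) :
    eIntegral μ φ = eIntegral μ χ := by
  unfold eIntegral
  congr 2 <;> exact lintegral_congr_ae (h.mono fun x hx ↦ by simp only [hx])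

theorem eIntegral_coe {μ : Measure ℝ} {f : ℝ → ℝ} (hf : Integrable f μ) :
    eIntegral μ (fun x ↦ (f x : EReal)) = ((∫ x, f x ∂μ : ℝ) : EReal) := by
  have hneg : ∫⁻ x, ENNReal.ofReal (-f x) ∂μ ≠ ⊤ := hf.neg.lintegral_lt_top.ne
  rw [integral_eq_lintegral_pos_part_sub_lintegral_neg_part hf, EReal.coe_sub,
    EReal.coe_ennreal_toReal hf.lintegral_lt_top.ne, EReal.coe_ennreal_toReal hneg]
  simp only [eIntegral, toENN_eq_toENNReal, ← EReal.coe_neg, EReal.real_coe_toENNReal]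

theorem ae_ne_bot_of_eIntegral_ne_bot {μ : Measure ℝ} {φ : ℝ → EReal} (hφ : AEMeasurable φ μ)
    (h : eIntegral μ φ ≠ ⊥) : ∀ᵐ x ∂μ, φ x ≠ ⊥ := by
  have hneg : AEMeasurable (fun x ↦ (-φ x).toENNReal) μ := by fun_prop
  filter_upwards [ae_lt_top' hneg (eIntegral_ne_bot_iff.1 h)] with x hx hbot
  simp [hbot] at hx

theorem Psi_ne_bot_iff {θ : ℝ} {ψ : ℝ → EReal} {μ : Measure ℝ} :
    Psi θ ψ μ ≠ ⊥ ↔ eIntegral μ (fun x ↦ ψ (x - θ)) ≠ ⊥ ∧ ∫⁻ x, expE (ψ x) ≠ ⊤ := by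
  simp [Psi, sub_eq_add_neg]

end Criterion

section Laplace

theorem memSC0_neg_abs : memSC0 fun x ↦ ((-|x| : ℝ) : EReal) := by
  refine ⟨fun x ↦ EReal.coe_lt_top _, ⟨0, EReal.coe_ne_bot _⟩,
    (continuous_coe_real_ereal.comp continuous_abs.neg).upperSemicontinuous, ?_, by simp⟩
  intro x y t ht₀ ht₁
  have h := abs_add_le (t * x) ((1 - t) * y)
  rw [abs_mul, abs_mul, abs_of_nonneg ht₀, abs_of_nonneg (sub_nonneg.2 ht₁)] at h
  beta_reduce
  exact_mod_cast show t * -|x| + (1 - t) * -|y| ≤ -|t * x + (1 - t) * y| by linarith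

theorem integrable_exp_neg_abs : Integrable fun x : ℝ ↦ Real.exp (-|x|) := by
  refine .of_integral_ne_zero ?_
  rw [integral_comp_abs (f := fun x ↦ Real.exp (-x)), integral_exp_neg_Ioi_zero]
  norm_num

theorem Psi_neg_abs_ne_bot {μ : Measure ℝ} [IsFiniteMeasure μ] (hμ : Integrable (fun x ↦ x) μ)
    (θ : ℝ) : Psi θ (fun x ↦ ((-|x| : ℝ) : EReal)) μ ≠ ⊥ := by
  have hint : Integrable (fun x ↦ -|x - θ|) μ := (hμ.sub (integrable_const θ)).abs.neg
  refine Psi_ne_bot_iff.2 ⟨?_, ?_⟩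
  · rw [eIntegral_coe hint]
    exact EReal.coe_ne_bot _
  · simp only [expE_eq_exp, EReal.exp_coe]
    exact integrable_exp_neg_abs.lintegral_lt_top.ne

theorem CondA.integrable {μ : Measure ℝ} (hμ : CondA μ) : Integrable (fun x ↦ x) μ :=
  ⟨aestronglyMeasurable_id, hasFiniteIntegral_iff_norm _ |>.2 hμ.2.2⟩

end Laplace

section PiecewiseBot

theorem upperSemicontinuous_piecewise_bot {α β : Type*} [TopologicalSpace α] [Preorder β]
    [OrderBot β] {s : Set α} [∀ x, Decidable (x ∈ s)] {f : α → β} (hs : IsClosed s)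
    (hf : UpperSemicontinuous f) : UpperSemicontinuous (s.piecewise f ⊥) := by
  intro x c hc
  by_cases hx : x ∈ s
  · rw [piecewise_eq_of_mem _ _ _ hx] at hc
    filter_upwards [hf x c hc] with y hy
    by_cases hys : y ∈ s
    · rwa [piecewise_eq_of_mem _ _ _ hys]
    · rw [piecewise_eq_of_notMem _ _ _ hys]
      exact bot_le.trans_lt hy
  · rw [piecewise_eq_of_notMem _ _ _ hx] at hc
    filter_upwards [hs.isOpen_compl.mem_nhds hx] with y hy
    rwa [piecewise_eq_of_notMem _ _ _ hy]

variable {s : Set ℝ} [∀ x, Decidable (x ∈ s)] {ψ : ℝ → EReal}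

theorem EConcave.piecewise_bot (hs : Convex ℝ s) (hψ : EConcave ψ) :
    EConcave (s.piecewise ψ ⊥) := by
  intro x y t ht₀ ht₁
  rcases ht₀.eq_or_lt with rfl | ht₀'
  · rw [show 0 * x + (1 - 0) * y = y by ring]
    simp
  rcases ht₁.eq_or_lt with rfl | ht₁'
  · rw [show 1 * x + (1 - 1) * y = x by ring]
    simp
  by_cases hx : x ∈ s
  · by_cases hy : y ∈ s
    · have hxy : t * x + (1 - t) * y ∈ s := hs hx hy ht₀ (sub_nonneg.2 ht₁) (by ring)
      simpa only [piecewise_eq_of_mem _ _ _ hx, piecewise_eq_of_mem _ _ _ hy,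
        piecewise_eq_of_mem _ _ _ hxy] using hψ x y t ht₀ ht₁
    · rw [piecewise_eq_of_notMem _ _ _ hy, Pi.bot_apply,
        EReal.coe_mul_bot_of_pos (sub_pos.2 ht₁'), EReal.add_bot]
      exact bot_le
  · rw [piecewise_eq_of_notMem _ _ _ hx, Pi.bot_apply, EReal.coe_mul_bot_of_pos ht₀',
      EReal.bot_add]
    exact bot_le

theorem memSC0.piecewise_bot (hψ : memSC0 ψ) (hclosed : IsClosed s) (hconvex : Convex ℝ s)
    (hsymm : ∀ x, -x ∈ s ↔ x ∈ s) (hne : ∃ x ∈ s, ψ x ≠ ⊥) : memSC0 (s.piecewise ψ ⊥) := by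
  obtain ⟨htop, -, husc, hconcave, heven⟩ := hψ
  obtain ⟨x, hxs, hx⟩ := hne
  refine ⟨fun y ↦ ?_, ⟨x, by rwa [piecewise_eq_of_mem _ _ _ hxs]⟩,
    upperSemicontinuous_piecewise_bot hclosed husc, hconcave.piecewise_bot hconvex, fun y ↦ ?_⟩
  · exact (piecewise_le (fun _ _ ↦ le_rfl) (fun _ _ ↦ bot_le) y).trans_lt (htop y)
  · simp only [Set.piecewise, hsymm, heven, Pi.bot_apply]

theorem lintegral_expE_piecewise_bot (hs : MeasurableSet s) :
    ∫⁻ x, expE (s.piecewise ψ ⊥ x) = ∫⁻ x in s, expE (ψ x) := by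
  rw [← lintegral_indicator hs]
  refine lintegral_congr fun x ↦ ?_
  by_cases hx : x ∈ s
  · simp [hx]
  · simp [hx, expE]

theorem Psi_lt_Psi_piecewise_bot {θ : ℝ} {μ : Measure ℝ} (hs : MeasurableSet s)
    (hμs : ∀ᵐ y ∂μ, y - θ ∈ s) (hbot : Psi θ ψ μ ≠ ⊥)
    (htop : eIntegral μ (fun y ↦ ψ (y - θ)) ≠ ⊤) (hout : ∫⁻ x in sᶜ, expE (ψ x) ≠ 0) :
    Psi θ ψ μ < Psi θ (s.piecewise ψ ⊥) μ := by
  obtain ⟨hI, hE⟩ := Psi_ne_bot_iff.1 hbot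
  have hlt : ∫⁻ x in s, expE (ψ x) < ∫⁻ x, expE (ψ x) :=
    calc ∫⁻ x in s, expE (ψ x)
      _ < (∫⁻ x in s, expE (ψ x)) + ∫⁻ x in sᶜ, expE (ψ x) :=
        ENNReal.lt_add_right (ne_top_of_le_ne_top hE (setLIntegral_le_lintegral s _)) hout
      _ = ∫⁻ x, expE (ψ x) := lintegral_add_compl _ hs
  have hcongr : (fun y ↦ s.piecewise ψ ⊥ (y - θ)) =ᵐ[μ] fun y ↦ ψ (y - θ) :=
    hμs.mono fun y hy ↦ piecewise_eq_of_mem _ _ _ hy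
  rw [Psi, Psi, eIntegral_congr_ae hcongr, lintegral_expE_piecewise_bot hs]
  exact EReal.sub_lt_sub_of_le_of_gt le_rfl (EReal.coe_ennreal_lt_coe_ennreal_iff.2 hlt) htop hI

end PiecewiseBot

section Maximizer

variable {ψ : ℝ → EReal} {μ : Measure ℝ} {θ : ℝ}

theorem EConcave.le_of_abs_le (hψ : EConcave ψ) (heven : ∀ x, ψ (-x) = ψ x) {x y : ℝ}
    (hxy : |x| ≤ |y|) : ψ y ≤ ψ x := by
  rcases eq_or_ne y 0 with rfl | hy
  · rw [abs_nonpos_iff.1 (hxy.trans_eq abs_zero)]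
  have hq : |x / y| ≤ 1 := by
    rw [abs_div]
    exact div_le_one_of_le₀ hxy (abs_nonneg y)
  obtain ⟨hq₁, hq₂⟩ := abs_le.1 hq
  set t := (1 + x / y) / 2 with ht
  have ht₀ : 0 ≤ t := by linarith
  have ht₁ : 0 ≤ 1 - t := by linarith
  calc ψ y = ((t + (1 - t) : ℝ) : EReal) * ψ y := by simp
    _ = t * ψ y + ((1 - t : ℝ) : EReal) * ψ (-y) := by
      rw [heven, EReal.coe_add, EReal.right_distrib_of_nonneg (EReal.coe_nonneg.2 ht₀)
        (EReal.coe_nonneg.2 ht₁)]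
    _ ≤ ψ (t * y + (1 - t) * -y) := hψ y (-y) t ht₀ (sub_nonneg.1 ht₁)
    _ = ψ x := by
      congr 1
      rw [ht]
      field_simp
      ring

theorem memSC0.le_of_abs_le (hψ : memSC0 ψ) {x y : ℝ} (hxy : |x| ≤ |y|) : ψ y ≤ ψ x :=
  EConcave.le_of_abs_le hψ.2.2.2.1 hψ.2.2.2.2 hxy

theorem memSC0.measurable (hψ : memSC0 ψ) : Measurable ψ :=
  hψ.2.2.1.measurable

theorem memSC0.abs_sub_le_of_eq_bot (hψ : memSC0 ψ) (hbot : Psi θ ψ μ ≠ ⊥) {x : ℝ}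
    (hx : ψ x = ⊥) {y : ℝ} (hy : y ∈ μ.support) : |y - θ| ≤ |x| := by
  have hmeas : Measurable fun y ↦ ψ (y - θ) := hψ.measurable.comp (measurable_id.sub_const θ)
  have hae : ∀ᵐ y ∂μ, |y - θ| ≤ |x| := by
    filter_upwards [ae_ne_bot_of_eIntegral_ne_bot hmeas.aemeasurable (Psi_ne_bot_iff.1 hbot).1]
      with y hy
    by_contra! hxy
    exact hy (le_bot_iff.1 (hx ▸ hψ.le_of_abs_le hxy.le))
  have hclosed : IsClosed {y : ℝ | |y - θ| ≤ |x|} := isClosed_le (by fun_prop) continuous_const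
  exact Measure.support_subset_of_isClosed hclosed hae hy

theorem memSC0.setLIntegral_expE_compl_Icc_ne_zero (hψ : memSC0 ψ) {r z : ℝ} (hr : 0 ≤ r)
    (hrz : r < |z|) (hz : ψ z ≠ ⊥) : ∫⁻ x in (Icc (-r) r)ᶜ, expE (ψ x) ≠ 0 := by
  refine ne_of_gt ?_
  calc 0 < expE (ψ z) * volume (Ioc r |z|) := by
        rw [expE_eq_exp, Real.volume_Ioc]
        exact ENNReal.mul_pos (mt EReal.exp_eq_zero_iff.1 hz)
          (ENNReal.ofReal_pos.2 (sub_pos.2 hrz)).ne'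
    _ = ∫⁻ _ in Ioc r |z|, expE (ψ z) := (setLIntegral_const _ _).symm
    _ ≤ ∫⁻ x in Ioc r |z|, expE (ψ x) := by
        refine setLIntegral_mono' measurableSet_Ioc fun x hx ↦ ?_
        rw [expE_eq_exp, expE_eq_exp, EReal.exp_le_exp_iff]
        exact hψ.le_of_abs_le ((abs_of_nonneg (hr.trans hx.1.le)).trans_le hx.2)
    _ ≤ ∫⁻ x in (Icc (-r) r)ᶜ, expE (ψ x) :=
        lintegral_mono_set fun x hx hx' ↦ hx.1.not_ge hx'.2

theorem memSC0.exists_mem_support_lt_abs_sub [IsFiniteMeasure μ] (hψ : memSC0 ψ)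
    (hmax : IsMaxOn (fun χ ↦ Psi θ χ μ) {χ | memSC0 χ} ψ) (hbot : Psi θ ψ μ ≠ ⊥) {r z : ℝ}
    (hr : 0 ≤ r) (hrz : r < |z|) (hz : ψ z ≠ ⊥) : ∃ y ∈ μ.support, r < |y - θ| := by
  by_contra! hS
  have hψ₀ (x : ℝ) : ψ x ≤ ψ 0 := hψ.le_of_abs_le (by simp)
  have hmem : memSC0 ((Icc (-r) r).piecewise ψ ⊥) := by
    refine hψ.piecewise_bot isClosed_Icc (convex_Icc _ _) (fun x ↦ ?_) ⟨0, ?_, ?_⟩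
    · rw [mem_Icc, mem_Icc, ← abs_le, ← abs_le, abs_neg]
    · simpa using hr
    · exact ne_bot_of_le_ne_bot hz (hψ₀ z)
  have hae : ∀ᵐ y ∂μ, y - θ ∈ Icc (-r) r := by
    filter_upwards [Measure.support_mem_ae] with y hy using abs_le.1 (hS y hy)
  have htop : eIntegral μ (fun y ↦ ψ (y - θ)) ≠ ⊤ :=
    eIntegral_ne_top_of_le (hψ.1 0).ne fun y ↦ hψ₀ (y - θ)
  exact (isMaxOn_iff.1 hmax _ hmem).not_gt (Psi_lt_Psi_piecewise_bot measurableSet_Icc hae hbot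
    htop (hψ.setLIntegral_expE_compl_Icc_ne_zero hr hrz hz))

theorem exists_abs_lt_abs_of_mem_nhds {U : Set ℝ} {x : ℝ} (hU : U ∈ nhds x) :
    ∃ z ∈ U, |x| < |z| := by
  rcases le_total 0 x with hx | hx
  · obtain ⟨u, hxu, hu⟩ := exists_Ico_subset_of_mem_nhds hU (exists_gt x)
    obtain ⟨z, hxz, hzu⟩ := exists_between hxu
    exact ⟨z, hu ⟨hxz.le, hzu⟩, (abs_of_nonneg hx).trans_lt (hxz.trans_le (le_abs_self z))⟩
  · obtain ⟨l, hlx, hl⟩ := exists_Ioc_subset_of_mem_nhds hU (exists_lt x)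
    obtain ⟨z, hlz, hzx⟩ := exists_between hlx
    exact ⟨z, hl ⟨hlz, hzx.le⟩,
      (abs_of_nonpos hx).trans_lt ((neg_lt_neg hzx).trans_le (neg_le_abs z))⟩

theorem memSC0.interior_dom_of_isMaxOn [IsFiniteMeasure μ] (hμ : Integrable (fun x ↦ x) μ)
    (hψ : memSC0 ψ) (hmax : IsMaxOn (fun χ ↦ Psi θ χ μ) {χ | memSC0 χ} ψ) :
    interior {x | ψ x ≠ ⊥} = {x | ∃ y ∈ μ.support, |x| < |y - θ|} := by
  have hbot : Psi θ ψ μ ≠ ⊥ :=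
    ne_bot_of_le_ne_bot (Psi_neg_abs_ne_bot hμ θ) (isMaxOn_iff.1 hmax _ memSC0_neg_abs)
  refine Subset.antisymm (fun x hx ↦ ?_) (interior_maximal ?_ ?_)
  · obtain ⟨z, hz, hxz⟩ := exists_abs_lt_abs_of_mem_nhds (mem_interior_iff_mem_nhds.1 hx)
    exact hψ.exists_mem_support_lt_abs_sub hmax hbot (abs_nonneg x) hxz hz
  · rintro x ⟨y, hy, hxy⟩ hx
    exact hxy.not_ge (hψ.abs_sub_le_of_eq_bot hbot hx hy)
  · simp only [← exists_prop, ofPred_exists]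
    exact isOpen_biUnion fun _ _ ↦ isOpen_lt continuous_abs continuous_const

end Maximizer

/-- With `(a, b)` the interior of `J(F) = {0 < F < 1}` and `ψ_θ` the
maximizer of `ψ ↦ Ψ(θ, ψ, F)` over `SC₀`, the interior of `dom ψ_θ` equals `(−d, d)`
where `d = max(b − θ, θ − a)` (as extended reals). -/
theorem statement11 (μ : Measure ℝ) (hA : CondA μ)
    (aE bE : EReal) (haE : aE ≠ ⊤) (hbE : bE ≠ ⊥)
    (hJ : interior (Jset μ) = {x : ℝ | aE < (x : EReal) ∧ (x : EReal) < bE})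
    (θ : ℝ) (ψθ : ℝ → EReal) (hψ : memSC0 ψθ)
    (hmaxψ : ∀ ψ' : ℝ → EReal, memSC0 ψ' → Psi θ ψ' μ ≤ Psi θ ψθ μ) :
    interior {x : ℝ | ψθ x ≠ ⊥} =
      {x : ℝ |
        -(max (bE - (θ : EReal)) ((θ : EReal) - aE)) < (x : EReal) ∧
          (x : EReal) < max (bE - (θ : EReal)) ((θ : EReal) - aE)} := by
  have := hA.1
  rw [hψ.interior_dom_of_isMaxOn hA.integrable (isMaxOn_iff.2 hmaxψ)]
  ext x
  rw [mem_ofPred_eq, mem_ofPred_eq, neg_lt_coe_and_coe_lt_iff,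
    coe_lt_max_sub_iff_exists_mem_support hA.2.1 hJ]
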